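/- Let f : ℝⁿ → [0,∞) be upper semicontinuous and log-concave with 0 < ∫_{ℝⁿ} f dx < ∞. Then the measure μ_f is finite and has a finite first moment, i.e. ∫_{ℝⁿ} |x| dμ_f(x) < ∞, and the measure ν_f is finite, i.e. ∫_{∂K_f} f dH^{n−1} < ∞. -/

import Mathlib

/-!
Write `f = e^{-φ}`. Since `0 < ∫ f < ∞`, `f` is at least some `δ > 0` on a ball `B(x₀, r)`, and a
value of `f` that is large, or not exponentially small far from `x₀`, would by log-concavity spread
to sets of too much mass; so `f ≤ e^C δ` for some `C`, and `f(x) ≤ A e^{-c|x|}`.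

Boundary: pushing the points of `∂K_f ∩ B(0, R)` outward along normals to the surface of a cube
does not decrease distances, so `H^{n-1}(∂K_f ∩ B(0, R)) = O(R^{n-1})`, which the exponential decay
of `f` absorbs.

Gradient: convexity of `φ` at the points of `B(x₀, r)` gives `r |∇φ(x)| ≤ C + ⟨∇φ(x), x - x₀⟩`.
The product `f(x) ⟨∇φ(x), x - x₀⟩` is the derivative at `h = 0⁺` of `f((1 - h) x + h x₀)`, whose
integral over `x` is `(1 - h)^{-n} ∫ f`; the difference quotients are at least `-C f`, so Fatou's
lemma yields `r ∫ f |∇φ| ≤ (n + C) ∫ f`.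
-/

open MeasureTheory Set Filter Topology Pointwise
open scoped ENNReal RealInnerProductSpace NNReal

noncomputable section

/-- Euclidean space ℝⁿ. -/
abbrev Euc (n : ℕ) := EuclideanSpace ℝ (Fin n)

/-- A nonnegative function is log-concave if `f((1-λ)x+λy) ≥ f(x)^{1-λ} f(y)^λ`. -/
def LogConcaveFn {n : ℕ} (f : Euc n → ℝ) : Prop :=
  ∀ x y : Euc n, ∀ l : ℝ, 0 ≤ l → l ≤ 1 →
    f x ^ (1 - l) * f y ^ l ≤ f ((1 - l) • x + l • y)

/-- Sup-convolution `(f⋆g)(x) = sup_y f(y) g(x-y)`, valued in `[0,∞]`. -/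
def supConv {n : ℕ} (f g : Euc n → ℝ) (x : Euc n) : ℝ≥0∞ :=
  ⨆ y : Euc n, ENNReal.ofReal (f y * g (x - y))

/-- Dilation `(t·g)(x) = g(x/t)^t`. -/
def dil {n : ℕ} (t : ℝ) (g : Euc n → ℝ) (x : Euc n) : ℝ :=
  g (t⁻¹ • x) ^ t

/-- Total mass `∫ f` of a nonnegative function, in `[0,∞]`. -/
def totalMass {n : ℕ} (f : Euc n → ℝ) : ℝ≥0∞ := ∫⁻ x, ENNReal.ofReal (f x)

/-- The difference quotient `(∫ f⋆(t·g) − ∫ f)/t`, valued in `EReal`. -/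
def deltaQuot {n : ℕ} (f g : Euc n → ℝ) (t : ℝ) : EReal :=
  ((t⁻¹ : ℝ) : EReal) *
    (((∫⁻ x, supConv f (dil t g) x : ℝ≥0∞) : EReal) - ((totalMass f : ℝ≥0∞) : EReal))

/-- The support `K_f`: closure of `{x : f(x) > 0}`. -/
def spt {n : ℕ} (f : Euc n → ℝ) : Set (Euc n) := closure {x | 0 < f x}

/-- `φ = -log f`. -/
def mlog {n : ℕ} (f : Euc n → ℝ) (x : Euc n) : ℝ := -Real.log (f x)

/-- The measure `μ_f`: pushforward of `f dx` under the (a.e. defined) gradient of `φ = -log f`. -/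
def muF {n : ℕ} (f : Euc n → ℝ) : Measure (Euc n) :=
  Measure.map (gradient (mlog f)) (volume.withDensity fun x => ENNReal.ofReal (f x))

-- The outer unit normal (Gauss) map of a convex set `K`, defined (H^{n-1}-a.e. uniquely)
-- at boundary points; junk value `0` where no outer normal exists.
open Classical in
def gaussMap {n : ℕ} (K : Set (Euc n)) (x : Euc n) : Euc n :=
  if h : ∃ u : Euc n, ‖u‖ = 1 ∧ ∀ y ∈ K, ⟪y - x, u⟫ ≤ 0 then h.choose else 0

/-- The weighted boundary measure `f · H^{n-1}|_{∂K_f}`. -/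
def bdryMeasure {n : ℕ} (f : Euc n → ℝ) : Measure (Euc n) :=
  ((μH[(n : ℝ) - 1] : Measure (Euc n)).restrict (frontier (spt f))).withDensity
    (fun x => ENNReal.ofReal (f x))

/-- The measure `ν_f` on the sphere: pushforward of `f · H^{n-1}|_{∂K_f}` under the Gauss map. -/
def nuF {n : ℕ} (f : Euc n → ℝ) : Measure (Euc n) :=
  Measure.map (gaussMap (spt f)) (bdryMeasure f)

/-- Positive part of an extended real, in `[0,∞]`. -/
def epos (a : EReal) : ℝ≥0∞ := if a = ⊤ then ⊤ else ENNReal.ofReal a.toReal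

/-- Integral of an `EReal`-valued function: positive part minus negative part. -/
def eInt {n : ℕ} (μ : Measure (Euc n)) (h : Euc n → EReal) : EReal :=
  ((∫⁻ x, epos (h x) ∂μ : ℝ≥0∞) : EReal) - ((∫⁻ x, epos (-(h x)) ∂μ : ℝ≥0∞) : EReal)

/-- The support function `h_g = (-log g)^*` of a log-concave function, valued in `EReal`. -/
def hSupp {n : ℕ} (g : Euc n → ℝ) (x : Euc n) : EReal :=
  ⨆ y : Euc n, (((⟪x, y⟫ : ℝ) : EReal) +
    (if g y = 0 then (⊥ : EReal) else ((Real.log (g y) : ℝ) : EReal)))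

/-- The support function of a set, valued in `EReal`. -/
def hSetE {n : ℕ} (K : Set (Euc n)) (x : Euc n) : EReal :=
  ⨆ y ∈ K, ((⟪y, x⟫ : ℝ) : EReal)

/-- The support function of a set, real-valued: `h_K(x) = sup_{y ∈ K} ⟨y, x⟩`. -/
def hSetR {n : ℕ} (K : Set (Euc n)) (x : Euc n) : ℝ :=
  sSup ((fun y => ⟪y, x⟫) '' K)

/-- Divergence of a vector field: the trace of its derivative. -/
def dvg {n : ℕ} (Φ : Euc n → Euc n) (x : Euc n) : ℝ :=
  LinearMap.trace ℝ (Euc n) (fderiv ℝ Φ x : Euc n →ₗ[ℝ] Euc n)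

/-- The anisotropic total variation `TV_L(f)`. -/
def TVL {n : ℕ} (L : Set (Euc n)) (f : Euc n → ℝ) : EReal :=
  ⨆ Φ : {Φ : Euc n → Euc n //
      ContDiff ℝ 1 Φ ∧ HasCompactSupport Φ ∧ ∀ x, gauge L (Φ x) ≤ 1},
    ((∫ x, f x * dvg Φ.1 x : ℝ) : EReal)

/-- The anisotropic perimeter `Per_L(A) = TV_L(1_A)`. -/
def PerL {n : ℕ} (L : Set (Euc n)) (A : Set (Euc n)) : EReal :=
  TVL L (A.indicator fun _ => (1 : ℝ))

/-- The surface area measure `S_F` of a convex body: pushforward of `H^{n-1}|_{∂F}`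
under the Gauss map. -/
def surfMeasure {n : ℕ} (F : Set (Euc n)) : Measure (Euc n) :=
  Measure.map (gaussMap F) ((μH[(n : ℝ) - 1] : Measure (Euc n)).restrict (frontier F))

section Geometry

variable {E : Type*} [NormedAddCommGroup E]

lemma exists_nonneg_norm_add_smul_eq [NormedSpace ℝ E] {x u : E} {R : ℝ} (hx : ‖x‖ ≤ R)
    (hu : u ≠ 0) : ∃ s : ℝ, 0 ≤ s ∧ ‖x + s • u‖ = R := by
  have hu' : 0 < ‖u‖ := norm_pos_iff.2 hu
  let t : ℝ := (R + ‖x‖) / ‖u‖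
  have ht : 0 ≤ t := div_nonneg (add_nonneg ((norm_nonneg x).trans hx) (norm_nonneg x)) hu'.le
  have hcont : Continuous fun s : ℝ => ‖x + s • u‖ := by fun_prop
  have hfar : R ≤ ‖x + t • u‖ := by
    have hnorm : ‖t • u‖ = R + ‖x‖ := by
      rw [norm_smul, Real.norm_of_nonneg ht, div_mul_cancel₀ _ hu'.ne']
    have := norm_sub_le (x + t • u) x
    rw [add_sub_cancel_left, hnorm] at this
    linarith
  obtain ⟨s, hs, hsR⟩ := intermediate_value_Icc ht hcont.continuousOn
    (show R ∈ Icc ‖x + (0 : ℝ) • u‖ ‖x + t • u‖ from ⟨by simpa using hx, hfar⟩)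
  exact ⟨s, hs.1, hsR⟩

lemma exists_mem_ball_of_mem_ball_half_add_half [NormedSpace ℝ E] {x y z : E} {r : ℝ}
    (hz : z ∈ Metric.ball ((1 / 2 : ℝ) • x + (1 / 2 : ℝ) • y) (r / 2)) :
    ∃ w ∈ Metric.ball x r, (1 / 2 : ℝ) • w + (1 / 2 : ℝ) • y = z := by
  refine ⟨(2 : ℝ) • z - y, ?_, by module⟩
  have hdouble : (2 : ℝ) • z - y - x =
      (2 : ℝ) • (z - ((1 / 2 : ℝ) • x + (1 / 2 : ℝ) • y)) := by module
  rw [mem_ball_iff_norm] at hz ⊢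
  rw [hdouble, norm_smul, Real.norm_two]
  linarith

variable [InnerProductSpace ℝ E]

lemma dist_le_dist_of_inner_sub_nonpos {p q x y : E} (hp : ⟪y - x, p - x⟫ ≤ 0)
    (hq : ⟪x - y, q - y⟫ ≤ 0) : dist x y ≤ dist p q := by
  rw [dist_eq_norm, dist_eq_norm]
  have hinner : ‖x - y‖ * ‖x - y‖ ≤ ‖x - y‖ * ‖p - q‖ :=
    calc ‖x - y‖ * ‖x - y‖ = ⟪x - y, x - y⟫ := (real_inner_self_eq_norm_mul_norm _).symm
      _ = ⟪x - y, p - q⟫ + ⟪y - x, p - x⟫ + ⟪x - y, q - y⟫ := by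
        simp only [inner_sub_left, inner_sub_right]; ring
      _ ≤ ⟪x - y, p - q⟫ := by linarith
      _ ≤ ‖x - y‖ * ‖p - q‖ := real_inner_le_norm _ _
  rcases (norm_nonneg (x - y)).eq_or_lt with hzero | hpos
  · rw [← hzero]; exact norm_nonneg _
  · exact le_of_mul_le_mul_left hinner hpos

lemma mul_norm_add_inner_le_of_forall_closedBall {g c : E} {r C : ℝ} (hr : 0 ≤ r)
    (h : ∀ y ∈ Metric.closedBall c r, ⟪g, y⟫ ≤ C) : r * ‖g‖ + ⟪g, c⟫ ≤ C := by
  rcases eq_or_ne g 0 with rfl | hg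
  · simpa using h c (Metric.mem_closedBall_self hr)
  have hg' : ‖g‖ ≠ 0 := norm_ne_zero_iff.2 hg
  have hmem : c + (r / ‖g‖) • g ∈ Metric.closedBall c r := by
    rw [mem_closedBall_iff_norm, add_sub_cancel_left, norm_smul,
      Real.norm_of_nonneg (by positivity), div_mul_cancel₀ _ hg']
  calc r * ‖g‖ + ⟪g, c⟫ = ⟪g, c + (r / ‖g‖) • g⟫ := by
        rw [inner_add_right, inner_smul_right, real_inner_self_eq_norm_sq]
        field_simp
        ring
    _ ≤ C := h _ hmem

lemma exists_normal_of_mem_frontier [CompleteSpace E] {K : Set E} (hK : Convex ℝ K)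
    (hKint : (interior K).Nonempty) {x : E} (hx : x ∈ frontier K) :
    ∃ u : E, u ≠ 0 ∧ ∀ y ∈ closure K, ⟪y - x, u⟫ ≤ 0 := by
  have hint : interior (closure K) = interior K :=
    hK.interior_closure_eq_interior_of_nonempty_interior hKint
  obtain ⟨g, hg, hle⟩ := geometric_hahn_banach_of_nonempty_interior_point hK.closure
    (hint ▸ hx.2) (hint ▸ hKint)
  refine ⟨(InnerProductSpace.toDual ℝ E).symm g, by simpa using hg, fun y hy => ?_⟩
  rw [real_inner_comm, InnerProductSpace.toDual_symm_apply, map_sub, sub_nonpos]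
  exact hle y hy

lemma hasDerivAt_comp_lineMap [CompleteSpace E] {φ : E → ℝ} {x : E} (hφ : DifferentiableAt ℝ φ x)
    (y : E) : HasDerivAt (fun t : ℝ => φ (AffineMap.lineMap x y t)) ⟪gradient φ x, y - x⟫ 0 := by
  have hgrad : HasFDerivAt φ (InnerProductSpace.toDual ℝ E (gradient φ x))
      (AffineMap.lineMap x y (0 : ℝ)) := by
    rw [AffineMap.lineMap_apply_zero]
    exact hφ.hasGradientAt.hasFDerivAt
  simpa [Function.comp_def] using hgrad.comp_hasDerivAt (0 : ℝ) AffineMap.hasDerivAt_lineMap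

lemma inner_gradient_sub_le_of_convexOn [CompleteSpace E] {s : Set E} {φ : E → ℝ}
    (hφ : ConvexOn ℝ s φ) {x y : E} (hx : x ∈ s) (hy : y ∈ s) (hd : DifferentiableAt ℝ φ x) :
    ⟪gradient φ x, y - x⟫ ≤ φ y - φ x := by
  have hline : ConvexOn ℝ (AffineMap.lineMap x y ⁻¹' s) (φ ∘ AffineMap.lineMap x y) :=
    hφ.comp_affineMap (AffineMap.lineMap x y)
  have hslope := hline.le_slope_of_hasDerivAt (x := 0) (y := 1) (by simpa using hx)
    (by simpa using hy) one_pos (hasDerivAt_comp_lineMap hd y)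
  simpa [slope_def_field] using hslope

end Geometry

section ConvexMeasure

variable {E : Type*} [NormedAddCommGroup E] [NormedSpace ℝ E] [FiniteDimensional ℝ E]
  [MeasurableSpace E] [BorelSpace E] {μ : Measure E} [μ.IsAddHaarMeasure]

lemma measure_eq_zero_of_convex_of_interior_eq_empty {L : Set E} (hL : Convex ℝ L)
    (hint : interior L = ∅) : μ L = 0 := by
  refine measure_mono_null ?_ (hL.addHaar_frontier μ)
  rw [frontier, hint, sdiff_empty]
  exact subset_closure

/-- Halving `L` towards a point `y ∈ L` yields a ball of fixed radius around a point halfway to `y`.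
Tightness of the finite measure `μ.restrict L` keeps these balls, hence `y`, in a bounded region. -/
lemma isBounded_of_convex_of_measure_ne_top {L : Set E} (hL : Convex ℝ L)
    (hLint : (interior L).Nonempty) (hfin : μ L ≠ ⊤) : Bornology.IsBounded L := by
  obtain ⟨x, hx⟩ := hLint
  obtain ⟨r, hr, hball⟩ := Metric.isOpen_iff.1 isOpen_interior x hx
  have : IsFiniteMeasure (μ.restrict L) := ⟨by simpa using hfin.lt_top⟩
  obtain ⟨ε, hε, hεball⟩ := exists_between (Metric.measure_ball_pos μ (0 : E) (half_pos hr))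
  obtain ⟨K, hK, hKle⟩ := isTightMeasureSet_iff_exists_isCompact_measure_compl_le.1
    (isTightMeasureSet_singleton (μ := μ.restrict L)) ε hε
  obtain ⟨R, hKR⟩ := hK.isBounded.subset_closedBall 0
  refine isBounded_iff_forall_norm_le.2 ⟨2 * R + r + ‖x‖, fun y hy => ?_⟩
  set c : E := (1 / 2 : ℝ) • x + (1 / 2 : ℝ) • y with hc
  have hcL : Metric.ball c (r / 2) ⊆ L := fun z hz => by
    obtain ⟨w, hw, rfl⟩ := exists_mem_ball_of_mem_ball_half_add_half hz
    exact hL (interior_subset (hball hw)) hy (by norm_num) (by norm_num) (by norm_num)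
  obtain ⟨z, hz, hzK⟩ : ∃ z ∈ Metric.ball c (r / 2), z ∈ K := by
    by_contra! hdisj
    have hle : μ (Metric.ball c (r / 2)) ≤ ε :=
      calc μ (Metric.ball c (r / 2)) ≤ μ (Kᶜ ∩ L) := measure_mono fun z hz => ⟨hdisj z hz, hcL hz⟩
        _ = μ.restrict L Kᶜ := (Measure.restrict_apply hK.measurableSet.compl).symm
        _ ≤ ε := hKle _ rfl
    rw [Measure.addHaar_ball_center] at hle
    exact hle.not_gt hεball
  have hzR : ‖z‖ ≤ R := mem_closedBall_zero_iff.1 (hKR hzK)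
  have hy_eq : y = (2 : ℝ) • (c - z) + (2 : ℝ) • z - x := by rw [hc]; module
  calc ‖y‖ ≤ 2 * ‖c - z‖ + 2 * ‖z‖ + ‖x‖ := by
        rw [hy_eq]
        refine (norm_sub_le _ _).trans (add_le_add_left ((norm_add_le _ _).trans_eq ?_) _)
        rw [norm_smul, norm_smul, Real.norm_two]
    _ ≤ 2 * R + r + ‖x‖ := by
        rw [mem_ball_iff_norm'] at hz
        linarith

lemma aemeasurable_of_quasiconcaveOn {f : E → ℝ} (hf : QuasiconcaveOn ℝ univ f) :
    AEMeasurable f μ := by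
  refine NullMeasurable.aemeasurable (measurable_of_Ici (δ := NullMeasurableSpace E μ) fun a => ?_)
  have hconv : Convex ℝ {x | a ≤ f x} := by simpa using hf a
  exact hconv.nullMeasurableSet μ

lemma exists_closedBall_forall_le_of_quasiconcaveOn {f : E → ℝ} (hf : QuasiconcaveOn ℝ univ f)
    (hpos : 0 < ∫⁻ x, ENNReal.ofReal (f x) ∂μ) :
    ∃ x : E, ∃ r δ : ℝ, 0 < r ∧ 0 < δ ∧ ∀ y ∈ Metric.closedBall x r, δ ≤ f y := by
  obtain ⟨k, x, hx⟩ : ∃ k : ℕ, (interior {x | 1 / ((k : ℝ) + 1) ≤ f x}).Nonempty := by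
    by_contra! hempty
    have hnull : ∀ k : ℕ, μ {x | 1 / ((k : ℝ) + 1) ≤ f x} = 0 := fun k =>
      measure_eq_zero_of_convex_of_interior_eq_empty (by simpa using hf (1 / ((k : ℝ) + 1)))
        (hempty k)
    have hae : ∀ᵐ x ∂μ, f x ≤ 0 := by
      filter_upwards [ae_all_iff.2 fun k => measure_eq_zero_iff_ae_notMem.1 (hnull k)] with x hx
      by_contra! hfx
      obtain ⟨k, hk⟩ := exists_nat_one_div_lt hfx
      exact hx k hk.le
    refine hpos.ne' ((lintegral_congr_ae ?_).trans lintegral_zero)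
    filter_upwards [hae] with x hx using ENNReal.ofReal_of_nonpos hx
  obtain ⟨r, hr, hball⟩ := Metric.nhds_basis_closedBall.mem_iff.1 (isOpen_interior.mem_nhds hx)
  refine ⟨x, r, 1 / ((k : ℝ) + 1), hr, by positivity, fun y hy => ?_⟩
  exact (interior_subset (hball hy) : y ∈ {x | 1 / ((k : ℝ) + 1) ≤ f x})

lemma integral_comp_smul_add {F : Type*} [NormedAddCommGroup F] [NormedSpace ℝ F] (f : E → F)
    {a : ℝ} (ha : 0 ≤ a) (b : E) :
    ∫ x, f (a • x + b) ∂μ = (a ^ Module.finrank ℝ E)⁻¹ • ∫ x, f x ∂μ := by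
  rw [Measure.integral_comp_smul_of_nonneg μ (fun z => f (z + b)) a (hR := ha),
    integral_add_right_eq_self f]

end ConvexMeasure

section Hausdorff

lemma hausdorffMeasure_le_of_edist_le_mul {X Y : Type*} [EMetricSpace X] [MeasurableSpace X]
    [BorelSpace X] [EMetricSpace Y] [MeasurableSpace Y] [BorelSpace Y] {s : Set X} {t : Set Y}
    {g : X → Y} {C : ℝ≥0} {d : ℝ} (hd : 0 ≤ d) (hgst : MapsTo g s t)
    (hg : ∀ x ∈ s, ∀ y ∈ s, edist x y ≤ C * edist (g x) (g y)) :
    μH[d] s ≤ (C : ℝ≥0∞) ^ d * μH[d] t := by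
  have hanti : AntilipschitzWith C (s.domRestrict g) := fun x y => hg x x.2 y y.2
  calc μH[d] s = μH[d] (univ : Set s) := by
        rw [← (isometry_subtype_coe (s := s)).hausdorffMeasure_image (Or.inl hd), image_univ,
          Subtype.range_coe]
    _ ≤ (C : ℝ≥0∞) ^ d * μH[d] (s.domRestrict g '' univ) := hanti.le_hausdorffMeasure_image hd univ
    _ ≤ (C : ℝ≥0∞) ^ d * μH[d] t := by
        gcongr
        rw [image_univ, range_domRestrict]
        exact hgst.image_subset

lemma sphere_pi_subset_iUnion_insertNth {m : ℕ} {R : ℝ} (hR : 0 < R) :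
    Metric.sphere (0 : Fin (m + 1) → ℝ) R ⊆ ⋃ i : Fin (m + 1),
      (i.insertNth (α := fun _ => ℝ) R '' Metric.closedBall 0 R ∪
        i.insertNth (α := fun _ => ℝ) (-R) '' Metric.closedBall 0 R) := by
  intro p hp
  rw [mem_sphere_zero_iff_norm] at hp
  have hle : ∀ i, |p i| ≤ R := fun i => hp ▸ norm_le_pi_norm p i
  obtain ⟨i, hi⟩ : ∃ i, |p i| = R := by
    by_contra! hne
    exact ((pi_norm_lt_iff hR).2 fun i => (hle i).lt_of_ne (hne i)).ne hp
  have hface : i.removeNth p ∈ Metric.closedBall (0 : Fin m → ℝ) R :=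
    mem_closedBall_zero_iff.2 ((pi_norm_le_iff_of_nonneg hR.le).2 fun j => hle _)
  have hinsert : i.insertNth (α := fun _ => ℝ) (p i) (i.removeNth p) = p :=
    Fin.insertNth_self_removeNth i p
  refine mem_iUnion.2 ⟨i, ?_⟩
  rcases (abs_eq hR.le).1 hi with h | h
  · exact Or.inl ⟨_, hface, h ▸ hinsert⟩
  · exact Or.inr ⟨_, hface, h ▸ hinsert⟩

lemma hausdorffMeasure_insertNth_image_closedBall {m : ℕ} (i : Fin (m + 1)) (t : ℝ) {R : ℝ}
    (hR : 0 ≤ R) :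
    μH[(m : ℝ)] (i.insertNth (α := fun _ => ℝ) t '' Metric.closedBall 0 R) =
      ENNReal.ofReal ((2 * R) ^ m) := by
  have hisom : Isometry (i.insertNth (α := fun _ => ℝ) t) := Isometry.of_dist_eq fun x y => by
    simp [Fin.dist_insertNth_insertNth]
  have hvol : (μH[(m : ℝ)] : Measure (Fin m → ℝ)) = volume := by
    simpa using hausdorffMeasure_pi_real (ι := Fin m)
  rw [hisom.hausdorffMeasure_image (Or.inl m.cast_nonneg), hvol,
    Real.volume_pi_closedBall _ hR, Fintype.card_fin]

lemma hausdorffMeasure_sphere_pi_le (m : ℕ) {R : ℝ} (hR : 0 < R) :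
    μH[(m : ℝ)] (Metric.sphere (0 : Fin (m + 1) → ℝ) R) ≤
      (m + 1) * (2 * ENNReal.ofReal ((2 * R) ^ m)) := by
  calc μH[(m : ℝ)] (Metric.sphere (0 : Fin (m + 1) → ℝ) R)
      ≤ ∑ i : Fin (m + 1), μH[(m : ℝ)] (i.insertNth (α := fun _ => ℝ) R '' Metric.closedBall 0 R ∪
          i.insertNth (α := fun _ => ℝ) (-R) '' Metric.closedBall 0 R) :=
        (measure_mono (sphere_pi_subset_iUnion_insertNth hR)).trans (measure_iUnion_fintype_le _ _)
    _ ≤ ∑ _i : Fin (m + 1), 2 * ENNReal.ofReal ((2 * R) ^ m) := by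
        refine Finset.sum_le_sum fun i _ => (measure_union_le _ _).trans_eq ?_
        rw [hausdorffMeasure_insertNth_image_closedBall i R hR.le,
          hausdorffMeasure_insertNth_image_closedBall i (-R) hR.le, ← two_mul]
    _ = (m + 1) * (2 * ENNReal.ofReal ((2 * R) ^ m)) := by simp

/-- Pushing a boundary point out along a normal until it meets the cube `‖·‖_∞ ≤ R` is expanding:
its inverse is the nearest-point projection onto `K`. -/
lemma exists_expanding_mapsTo_sphere_pi {m : ℕ} {K : Set (Euc (m + 1))} (hK : Convex ℝ K)
    (hKint : (interior K).Nonempty) (R : ℝ) :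
    ∃ g : Euc (m + 1) → Euc (m + 1),
      MapsTo (WithLp.ofLp ∘ g) (frontier K ∩ Metric.closedBall 0 R)
        (Metric.sphere (0 : Fin (m + 1) → ℝ) R) ∧
      ∀ x ∈ frontier K ∩ Metric.closedBall 0 R, ∀ y ∈ frontier K ∩ Metric.closedBall 0 R,
        dist x y ≤ dist (g x) (g y) := by
  have hexit : ∀ x ∈ frontier K ∩ Metric.closedBall 0 R, ∃ p : Euc (m + 1),
      WithLp.ofLp p ∈ Metric.sphere (0 : Fin (m + 1) → ℝ) R ∧
        ∀ y ∈ closure K, ⟪y - x, p - x⟫ ≤ 0 := by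
    rintro x ⟨hxK, hxR⟩
    obtain ⟨u, hu, hnormal⟩ := exists_normal_of_mem_frontier hK hKint hxK
    have hxsup : ‖WithLp.ofLp x‖ ≤ R := by
      rw [mem_closedBall_zero_iff] at hxR
      exact (pi_norm_le_iff_of_nonneg ((norm_nonneg x).trans hxR)).2
        fun i => (PiLp.norm_apply_le x i).trans hxR
    obtain ⟨s, hs, hsR⟩ := exists_nonneg_norm_add_smul_eq hxsup
      ((WithLp.ofLp_eq_zero 2).not.2 hu)
    refine ⟨x + s • u, by simpa using hsR, fun y hy => ?_⟩
    rw [add_sub_cancel_left, inner_smul_right]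
    exact mul_nonpos_of_nonneg_of_nonpos hs (hnormal y hy)
  choose! g hgR hg using hexit
  refine ⟨g, hgR, fun x hx y hy => dist_le_dist_of_inner_sub_nonpos ?_ ?_⟩
  · exact hg x hx y (frontier_subset_closure hy.1)
  · exact hg y hy x (frontier_subset_closure hx.1)

lemma exists_hausdorffMeasure_frontier_inter_closedBall_le (m : ℕ) :
    ∃ C : ℝ≥0∞, C ≠ ⊤ ∧ ∀ K : Set (Euc (m + 1)), Convex ℝ K → (interior K).Nonempty →
      ∀ R : ℝ, 0 < R →
        μH[(m : ℝ)] (frontier K ∩ Metric.closedBall 0 R) ≤ C * ENNReal.ofReal R ^ m := by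
  have hofLp := PiLp.antilipschitzWith_ofLp 2 (fun _ : Fin (m + 1) => ℝ)
  set B : ℝ≥0 := (Fintype.card (Fin (m + 1)) : ℝ≥0) ^ (1 / (2 : ℝ≥0∞)).toReal
  refine ⟨(B : ℝ≥0∞) ^ (m : ℝ) * ((m + 1) * (2 * 2 ^ m)), by finiteness,
    fun K hK hKint R hR => ?_⟩
  obtain ⟨g, hgR, hg⟩ := exists_expanding_mapsTo_sphere_pi hK hKint R
  have hexpand : ∀ x ∈ frontier K ∩ Metric.closedBall 0 R,
      ∀ y ∈ frontier K ∩ Metric.closedBall 0 R,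
        edist x y ≤ B * edist ((WithLp.ofLp ∘ g) x) ((WithLp.ofLp ∘ g) y) := fun x hx y hy => by
    refine le_trans ?_ (hofLp (g x) (g y))
    rw [edist_dist, edist_dist]
    exact ENNReal.ofReal_le_ofReal (hg x hx y hy)
  calc μH[(m : ℝ)] (frontier K ∩ Metric.closedBall 0 R)
      ≤ (B : ℝ≥0∞) ^ (m : ℝ) * μH[(m : ℝ)] (Metric.sphere (0 : Fin (m + 1) → ℝ) R) :=
        hausdorffMeasure_le_of_edist_le_mul m.cast_nonneg hgR hexpand
    _ ≤ (B : ℝ≥0∞) ^ (m : ℝ) * ((m + 1) * (2 * ENNReal.ofReal ((2 * R) ^ m))) := by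
        gcongr
        exact hausdorffMeasure_sphere_pi_le m hR
    _ = (B : ℝ≥0∞) ^ (m : ℝ) * ((m + 1) * (2 * 2 ^ m)) * ENNReal.ofReal R ^ m := by
        rw [ENNReal.ofReal_pow (by positivity), ENNReal.ofReal_mul zero_le_two,
          ENNReal.ofReal_ofNat]
        ring

lemma lintegral_exp_neg_norm_lt_top_of_measure_closedBall_le {E : Type*}
    [SeminormedAddCommGroup E] [MeasurableSpace E] [OpensMeasurableSpace E] {μ : Measure E}
    {C : ℝ≥0∞} {m : ℕ} (hC : C ≠ ⊤)
    (hμ : ∀ R : ℝ, 0 < R → μ (Metric.closedBall 0 R) ≤ C * ENNReal.ofReal R ^ m)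
    {c : ℝ} (hc : 0 < c) : ∫⁻ x, ENNReal.ofReal (Real.exp (-c * ‖x‖)) ∂μ < ⊤ := by
  have hpointwise : ∀ x : E, ENNReal.ofReal (Real.exp (-c * ‖x‖)) ≤
      ∑' k : ℕ, (Metric.closedBall (0 : E) (k + 1)).indicator
        (fun _ => ENNReal.ofReal (Real.exp (-c * k))) x := fun x => by
    refine le_trans ?_ (ENNReal.le_tsum ⌊‖x‖⌋₊)
    rw [indicator_of_mem (mem_closedBall_zero_iff.2 (Nat.lt_floor_add_one _).le)]
    refine ENNReal.ofReal_le_ofReal (Real.exp_le_exp.2 ?_)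
    exact mul_le_mul_of_nonpos_left (Nat.floor_le (norm_nonneg x)) (neg_nonpos.2 hc.le)
  have hsum : Summable fun k : ℕ => Real.exp (-c * k) * ((k : ℝ) + 1) ^ m := by
    have hshift := (summable_nat_add_iff 1).2 (Real.summable_pow_mul_exp_neg_nat_mul m hc)
    refine (hshift.mul_left (Real.exp c)).congr fun k => ?_
    push_cast
    rw [mul_left_comm, ← Real.exp_add, mul_comm]
    ring_nf
  calc ∫⁻ x, ENNReal.ofReal (Real.exp (-c * ‖x‖)) ∂μ
      ≤ ∑' k : ℕ, ENNReal.ofReal (Real.exp (-c * k)) * μ (Metric.closedBall 0 (k + 1)) := by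
        refine (lintegral_mono hpointwise).trans_eq ?_
        rw [lintegral_tsum fun k =>
          (measurable_const.indicator Metric.isClosed_closedBall.measurableSet).aemeasurable]
        simp_rw [lintegral_indicator_const Metric.isClosed_closedBall.measurableSet]
    _ ≤ ∑' k : ℕ, C * ENNReal.ofReal (Real.exp (-c * k) * ((k : ℝ) + 1) ^ m) := by
        refine ENNReal.tsum_le_tsum fun k => ?_
        rw [ENNReal.ofReal_mul (Real.exp_pos _).le, ENNReal.ofReal_pow (by positivity),
          mul_left_comm]
        gcongr
        exact hμ _ (by positivity)
    _ < ⊤ := by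
        rw [ENNReal.tsum_mul_left, ← ENNReal.ofReal_tsum_of_nonneg (fun k => by positivity) hsum]
        exact ENNReal.mul_lt_top hC.lt_top ENNReal.ofReal_lt_top

lemma setLIntegral_frontier_exp_neg_norm_lt_top {n : ℕ} {K : Set (Euc n)} (hK : Convex ℝ K)
    (hKint : (interior K).Nonempty) {c : ℝ} (hc : 0 < c) :
    ∫⁻ x in frontier K, ENNReal.ofReal (Real.exp (-c * ‖x‖)) ∂μH[(n : ℝ) - 1] < ⊤ := by
  rcases n with _ | m
  · simp
  obtain ⟨C, hC, hfrontier⟩ := exists_hausdorffMeasure_frontier_inter_closedBall_le m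
  rw [Nat.cast_add_one, add_sub_cancel_right]
  refine lintegral_exp_neg_norm_lt_top_of_measure_closedBall_le (m := m) hC (fun R hR => ?_) hc
  rw [Measure.restrict_apply Metric.isClosed_closedBall.measurableSet, inter_comm]
  exact hfrontier K hK hKint R hR

end Hausdorff

section ContractionQuotient

/-- The difference quotient at time `h` of `f` along the homothety of ratio `1 - h` that contracts
space to `x₀`. For `f = e^{-φ}` it replaces integration by parts of `f ⟨∇φ, x - x₀⟩`, which is its
limit as `h → 0⁺`. -/
def contractionQuotient {E : Type*} [AddCommGroup E] [Module ℝ E] (f : E → ℝ) (x₀ : E) (h : ℝ)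
    (x : E) : ℝ :=
  (f ((1 - h) • x + h • x₀) - f x) / h

lemma tendsto_inv_one_sub_pow_sub_one_div (d : ℕ) :
    Tendsto (fun h : ℝ => (((1 - h) ^ d)⁻¹ - 1) / h) (𝓝[>] 0) (𝓝 d) := by
  have hderiv : HasDerivAt (fun h : ℝ => ((1 - h) ^ d)⁻¹) d 0 := by
    simpa using (((hasDerivAt_id' (0 : ℝ)).const_sub 1).fun_pow d).fun_inv (by simp)
  refine ((hasDerivWithinAt_iff_tendsto_slope' self_notMem_Ioi).1
    (hderiv.hasDerivWithinAt (s := Ioi 0))).congr fun h => ?_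
  simp [slope_def_field]

variable {E : Type*} [NormedAddCommGroup E] [NormedSpace ℝ E] [FiniteDimensional ℝ E]
  [MeasurableSpace E] [BorelSpace E] {μ : Measure E} [μ.IsAddHaarMeasure] {f : E → ℝ}

lemma integrable_comp_contraction (hf : Integrable f μ) (x₀ : E) {h : ℝ} (hh : h ≠ 1) :
    Integrable (fun x => f ((1 - h) • x + h • x₀)) μ :=
  (hf.comp_add_right (h • x₀)).comp_smul (sub_ne_zero.2 hh.symm)

lemma integrable_contractionQuotient (hf : Integrable f μ) (x₀ : E) {h : ℝ} (hh : h ≠ 1) :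
    Integrable (contractionQuotient f x₀ h) μ :=
  ((integrable_comp_contraction hf x₀ hh).sub hf).div_const h

lemma aemeasurable_contractionQuotient (hf : Integrable f μ) (x₀ : E) (h : ℝ) :
    AEMeasurable (contractionQuotient f x₀ h) μ := by
  rcases eq_or_ne h 1 with rfl | hh
  · have hconst : contractionQuotient f x₀ 1 = fun x => f x₀ - f x := by
      ext x
      simp [contractionQuotient]
    exact hconst ▸ hf.aemeasurable.const_sub (f x₀)
  · exact (integrable_contractionQuotient hf x₀ hh).aemeasurable

lemma tendsto_integral_contractionQuotient_add (hf : Integrable f μ) (x₀ : E) (C : ℝ) :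
    Tendsto (fun h => ∫ x, (contractionQuotient f x₀ h x + C * f x) ∂μ) (𝓝[>] 0)
      (𝓝 ((Module.finrank ℝ E + C) * ∫ x, f x ∂μ)) := by
  refine (((tendsto_inv_one_sub_pow_sub_one_div (Module.finrank ℝ E)).add_const C).mul_const
    (∫ x, f x ∂μ)).congr' ?_
  filter_upwards [Ioo_mem_nhdsGT one_pos] with h hh
  rw [integral_add (integrable_contractionQuotient hf x₀ hh.2.ne) (hf.const_mul C)]
  simp only [contractionQuotient]
  rw [integral_div, integral_sub (integrable_comp_contraction hf x₀ hh.2.ne) hf,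
    integral_comp_smul_add f (sub_nonneg.2 hh.2.le), integral_const_mul, smul_eq_mul]
  ring

end ContractionQuotient

lemma exp_neg_mlog {n : ℕ} {f : Euc n → ℝ} {x : Euc n} (hx : 0 < f x) :
    Real.exp (-mlog f x) = f x := by
  rw [mlog, neg_neg, Real.exp_log hx]

namespace LogConcaveFn

variable {n : ℕ} {f : Euc n → ℝ} {x x₀ : Euc n}

section Decay

lemma quasiconcaveOn (hf : LogConcaveFn f) (hf0 : ∀ x, 0 ≤ f x) : QuasiconcaveOn ℝ univ f := by
  intro s
  rcases le_or_gt s 0 with hs | hs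
  · simpa [hs.trans (hf0 _)] using convex_univ
  rintro x ⟨-, hx⟩ y ⟨-, hy⟩ a b ha hb hab
  obtain rfl : a = 1 - b := by linarith
  refine ⟨mem_univ _, ?_⟩
  calc s = s ^ (1 - b) * s ^ b := by rw [← Real.rpow_add hs, hab, Real.rpow_one]
    _ ≤ f x ^ (1 - b) * f y ^ b := by
        have := hf0 x
        gcongr
    _ ≤ f ((1 - b) • x + b • y) := hf x y b hb (by linarith)

lemma convex_spt (hf : LogConcaveFn f) (hf0 : ∀ x, 0 ≤ f x) : Convex ℝ (spt f) := by
  have hpos : Convex ℝ {x | 0 < f x} := by simpa using (hf.quasiconcaveOn hf0).convex_gt 0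
  exact hpos.closure

lemma aemeasurable (hf : LogConcaveFn f) (hf0 : ∀ x, 0 ≤ f x) : AEMeasurable f :=
  aemeasurable_of_quasiconcaveOn (hf.quasiconcaveOn hf0)

lemma integrable (hf : LogConcaveFn f) (hf0 : ∀ x, 0 ≤ f x) (hfin : totalMass f < ⊤) :
    Integrable f :=
  ⟨(hf.aemeasurable hf0).aestronglyMeasurable,
    (hasFiniteIntegral_iff_ofReal (ae_of_all _ hf0)).2 hfin⟩

/-- A large value at `y` forces `f ≥ √(δ f(y))` on a ball halfway to `y`, which costs mass. -/
lemma exists_forall_le (hf : LogConcaveFn f) (hf0 : ∀ x, 0 ≤ f x) (hfin : totalMass f < ⊤)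
    {r δ : ℝ} (hr : 0 < r) (hδ : 0 < δ) (hball : ∀ y ∈ Metric.closedBall x₀ r, δ ≤ f y) :
    ∃ A : ℝ, ∀ y, f y ≤ A := by
  set v : ℝ≥0∞ := volume (Metric.ball (0 : Euc n) (r / 2))
  have hv0 : v ≠ 0 := (Metric.measure_ball_pos volume 0 (half_pos hr)).ne'
  refine ⟨(totalMass f / v).toReal ^ 2 / δ, fun y => ?_⟩
  set c : Euc n := (1 / 2 : ℝ) • x₀ + (1 / 2 : ℝ) • y
  have hlower : ∀ z ∈ Metric.ball c (r / 2), √(δ * f y) ≤ f z := fun z hz => by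
    obtain ⟨w, hw, rfl⟩ := exists_mem_ball_of_mem_ball_half_add_half hz
    have hδw : δ ≤ f w := hball w (Metric.ball_subset_closedBall hw)
    calc √(δ * f y) ≤ √(f w * f y) := Real.sqrt_le_sqrt (by have := hf0 y; gcongr)
      _ = f w ^ (1 - 1 / 2 : ℝ) * f y ^ (1 / 2 : ℝ) := by
          rw [Real.sqrt_eq_rpow, Real.mul_rpow (hf0 w) (hf0 y)]
          norm_num
      _ ≤ f ((1 - 1 / 2 : ℝ) • w + (1 / 2 : ℝ) • y) := hf w y _ (by norm_num) (by norm_num)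
      _ = f ((1 / 2 : ℝ) • w + (1 / 2 : ℝ) • y) := by norm_num
  have hmass : ENNReal.ofReal √(δ * f y) * v ≤ totalMass f :=
    calc ENNReal.ofReal √(δ * f y) * v
        = ∫⁻ _ in Metric.ball c (r / 2), ENNReal.ofReal √(δ * f y) := by
          rw [setLIntegral_const, Measure.addHaar_ball_center]
      _ ≤ ∫⁻ z in Metric.ball c (r / 2), ENNReal.ofReal (f z) :=
          setLIntegral_mono' measurableSet_ball fun z hz => ENNReal.ofReal_le_ofReal (hlower z hz)
      _ ≤ totalMass f := setLIntegral_le_lintegral _ _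
  have hsqrt : √(δ * f y) ≤ (totalMass f / v).toReal :=
    (ENNReal.ofReal_le_iff_le_toReal (ENNReal.div_ne_top hfin.ne hv0)).1
      ((ENNReal.le_div_iff_mul_le (Or.inl hv0) (Or.inl measure_ball_ne_top)).2 hmass)
  rw [le_div_iff₀ hδ, mul_comm]
  exact (Real.sqrt_le_iff.1 hsqrt).2

lemma isBounded_superlevel (hf : LogConcaveFn f) (hf0 : ∀ x, 0 ≤ f x) (hfin : totalMass f < ⊤)
    {s : ℝ} (hs : 0 < s) (hint : (interior {x | s ≤ f x}).Nonempty) :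
    Bornology.IsBounded {x | s ≤ f x} :=
  isBounded_of_convex_of_measure_ne_top (μ := volume) (by simpa using hf.quasiconcaveOn hf0 s) hint
    ((hf.integrable hf0 hfin).measure_ge_lt_top hs).ne

/-- On a ray from `x₀` that leaves `{f ≥ δ/e}` before time `R`, concavity of `log f` propagates
the drop by `1` per length `R`. -/
lemma le_mul_exp_of_superlevel_subset_ball (hf : LogConcaveFn f) {R δ : ℝ} (hδ : 0 < δ)
    (hx₀ : δ ≤ f x₀) (hR : 0 < R) (hlevel : {y | δ * Real.exp (-1) ≤ f y} ⊆ Metric.ball x₀ R)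
    (hx : R ≤ ‖x - x₀‖) : f x ≤ δ * Real.exp (-(‖x - x₀‖ / R)) := by
  set D := ‖x - x₀‖
  have hD : 0 < D := hR.trans_le hx
  have hl : 0 < R / D := by positivity
  have hl1 : R / D ≤ 1 := (div_le_one hD).2 hx
  set y : Euc n := (1 - R / D) • x₀ + (R / D) • x with hy
  have hyR : ‖y - x₀‖ = R := by
    have : y - x₀ = (R / D) • (x - x₀) := by rw [hy]; module
    rw [this, norm_smul, Real.norm_of_nonneg hl.le, div_mul_cancel₀ _ hD.ne']
  by_contra! hlt
  have hmem : δ * Real.exp (-1) ≤ f y :=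
    calc δ * Real.exp (-1) = δ ^ (1 - R / D) * (δ * Real.exp (-(D / R))) ^ (R / D) := by
          rw [Real.mul_rpow hδ.le (Real.exp_pos _).le, ← Real.exp_mul, ← mul_assoc,
            ← Real.rpow_add hδ, sub_add_cancel, Real.rpow_one]
          congr 2
          field_simp
      _ ≤ f x₀ ^ (1 - R / D) * f x ^ (R / D) := by
          have := hδ.le.trans hx₀
          gcongr
      _ ≤ f y := hf x₀ x _ hl.le hl1
  exact (mem_ball_iff_norm.1 (hlevel hmem)).ne hyR

lemma exists_forall_le_mul_exp_neg_norm (hf : LogConcaveFn f) (hf0 : ∀ x, 0 ≤ f x)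
    (hfin : totalMass f < ⊤) {r δ : ℝ} (hr : 0 < r) (hδ : 0 < δ)
    (hball : ∀ y ∈ Metric.closedBall x₀ r, δ ≤ f y) :
    ∃ A c : ℝ, 0 < c ∧ ∀ x, f x ≤ A * Real.exp (-c * ‖x‖) := by
  obtain ⟨A, hA⟩ := hf.exists_forall_le hf0 hfin hr hδ hball
  have hδx₀ : δ ≤ f x₀ := hball x₀ (Metric.mem_closedBall_self hr.le)
  have hδA : δ ≤ A := hδx₀.trans (hA x₀)
  have hA0 : 0 ≤ A := hδ.le.trans hδA
  have hint : (interior {y | δ * Real.exp (-1) ≤ f y}).Nonempty := by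
    refine ⟨x₀, mem_interior_iff_mem_nhds.2 ?_⟩
    filter_upwards [Metric.closedBall_mem_nhds x₀ hr] with y hy
    exact (mul_le_of_le_one_right hδ.le (Real.exp_le_one_iff.2 (by norm_num))).trans (hball y hy)
  obtain ⟨R, hR, hlevel⟩ :=
    (hf.isBounded_superlevel hf0 hfin (by positivity) hint).subset_ball_lt 0 x₀
  have hcentred : ∀ x, f x ≤ A * Real.exp (1 - ‖x - x₀‖ / R) := fun x => by
    rcases le_total R ‖x - x₀‖ with hx | hx
    · refine (hf.le_mul_exp_of_superlevel_subset_ball hδ hδx₀ hR hlevel hx).trans ?_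
      gcongr
      linarith
    · refine (hA x).trans (le_mul_of_one_le_right hA0 (Real.one_le_exp ?_))
      exact sub_nonneg.2 ((div_le_one hR).2 hx)
  refine ⟨A * Real.exp (1 + ‖x₀‖ / R), R⁻¹, by positivity, fun x => (hcentred x).trans ?_⟩
  rw [mul_assoc, ← Real.exp_add]
  gcongr
  have htriangle : ‖x‖ / R ≤ (‖x - x₀‖ + ‖x₀‖) / R := by gcongr; exact norm_le_norm_sub_add x x₀
  rw [add_div] at htriangle
  rw [neg_mul, inv_mul_eq_div]
  linarith

lemma setLIntegral_frontier_spt_lt_top (hf : LogConcaveFn f) (hf0 : ∀ x, 0 ≤ f x)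
    (hfin : totalMass f < ⊤) {r δ : ℝ} (hr : 0 < r) (hδ : 0 < δ)
    (hball : ∀ y ∈ Metric.closedBall x₀ r, δ ≤ f y) :
    ∫⁻ x in frontier (spt f), ENNReal.ofReal (f x) ∂μH[(n : ℝ) - 1] < ⊤ := by
  obtain ⟨A, c, hc, hdecay⟩ := hf.exists_forall_le_mul_exp_neg_norm hf0 hfin hr hδ hball
  have hint : (interior (spt f)).Nonempty := by
    refine ⟨x₀, mem_interior_iff_mem_nhds.2 ?_⟩
    filter_upwards [Metric.closedBall_mem_nhds x₀ hr] with y hy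
    exact subset_closure (hδ.trans_le (hball y hy))
  calc ∫⁻ x in frontier (spt f), ENNReal.ofReal (f x) ∂μH[(n : ℝ) - 1]
      ≤ ∫⁻ x in frontier (spt f), ENNReal.ofReal A * ENNReal.ofReal (Real.exp (-c * ‖x‖))
          ∂μH[(n : ℝ) - 1] := lintegral_mono fun x => by
        rw [← ENNReal.ofReal_mul' (Real.exp_pos _).le]
        exact ENNReal.ofReal_le_ofReal (hdecay x)
    _ = ENNReal.ofReal A * ∫⁻ x in frontier (spt f), ENNReal.ofReal (Real.exp (-c * ‖x‖))
          ∂μH[(n : ℝ) - 1] := lintegral_const_mul' _ _ ENNReal.ofReal_ne_top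
    _ < ⊤ := ENNReal.mul_lt_top ENNReal.ofReal_lt_top
        (setLIntegral_frontier_exp_neg_norm_lt_top (hf.convex_spt hf0) hint hc)

end Decay

section Gradient

lemma convexOn_mlog (hf : LogConcaveFn f) : ConvexOn ℝ {x | 0 < f x} (mlog f) := by
  have hpow : ∀ {x y : Euc n} {a b : ℝ}, 0 < f x → 0 < f y → 0 ≤ a → 0 ≤ b → a + b = 1 →
      0 < f x ^ a * f y ^ b ∧ f x ^ a * f y ^ b ≤ f (a • x + b • y) := by
    intro x y a b hx hy ha hb hab
    obtain rfl : a = 1 - b := by linarith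
    exact ⟨by positivity, hf x y b hb (by linarith)⟩
  refine ⟨fun x hx y hy a b ha hb hab => ?_, fun x hx y hy a b ha hb hab => ?_⟩
  · obtain ⟨hpos, hle⟩ := hpow hx hy ha hb hab
    exact hpos.trans_le hle
  · obtain ⟨hpos, hle⟩ := hpow hx hy ha hb hab
    have hlog := Real.log_le_log hpos hle
    have hx : 0 < f x := hx
    have hy : 0 < f y := hy
    rw [Real.log_mul (by positivity) (by positivity), Real.log_rpow hx, Real.log_rpow hy] at hlog
    simp only [mlog, smul_eq_mul]
    linarith

lemma mul_norm_gradient_mlog_le (hf : LogConcaveFn f) (hx : 0 < f x)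
    (hd : DifferentiableAt ℝ (mlog f) x) {r C : ℝ} (hr : 0 ≤ r)
    (hC : ∀ y ∈ Metric.closedBall x₀ r, f x ≤ Real.exp C * f y) :
    r * ‖gradient (mlog f) x‖ ≤ C - ⟪gradient (mlog f) x, x₀ - x⟫ := by
  have hball : ∀ y ∈ Metric.closedBall x₀ r,
      ⟪gradient (mlog f) x, y⟫ ≤ C + ⟪gradient (mlog f) x, x⟫ := fun y hy => by
    have hy0 : 0 < f y := pos_of_mul_pos_right (hx.trans_le (hC y hy)) (Real.exp_pos C).le
    have hconv := inner_gradient_sub_le_of_convexOn hf.convexOn_mlog hx hy0 hd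
    have hlog := Real.log_le_log hx (hC y hy)
    rw [Real.log_mul (Real.exp_pos C).ne' hy0.ne', Real.log_exp] at hlog
    rw [inner_sub_right] at hconv
    simp only [mlog] at hconv
    linarith
  have := mul_norm_add_inner_le_of_forall_closedBall hr hball
  rw [inner_sub_right]
  linarith

lemma contractionQuotient_add_nonneg (hf : LogConcaveFn f) (hf0 : ∀ x, 0 ≤ f x) {C h : ℝ}
    (hC : f x ≤ Real.exp C * f x₀) (hh : 0 < h) (hh1 : h ≤ 1) :
    0 ≤ contractionQuotient f x₀ h x + C * f x := by
  have hx := hf0 x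
  have hratio : Real.exp (-C) * f x ≤ f x₀ := by
    rwa [Real.exp_neg, inv_mul_le_iff₀ (Real.exp_pos C)]
  have hlower : f x * (1 - C * h) ≤ f ((1 - h) • x + h • x₀) :=
    calc f x * (1 - C * h) ≤ f x * Real.exp (-C * h) := by
          gcongr
          linarith [Real.add_one_le_exp (-C * h)]
      _ = f x ^ (1 - h) * (Real.exp (-C) * f x) ^ h := by
          rw [Real.mul_rpow (Real.exp_pos _).le hx, ← Real.exp_mul, mul_left_comm,
            ← Real.rpow_add' hx (by norm_num), sub_add_cancel, Real.rpow_one, mul_comm]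
      _ ≤ f x ^ (1 - h) * f x₀ ^ h := by gcongr
      _ ≤ f ((1 - h) • x + h • x₀) := hf x x₀ h hh.le hh1
  rw [contractionQuotient, div_add' _ _ _ hh.ne']
  exact div_nonneg (by linarith) hh.le

lemma tendsto_contractionQuotient (hf : LogConcaveFn f) (hx : 0 < f x) (hx₀ : 0 < f x₀)
    (hd : DifferentiableAt ℝ (mlog f) x) :
    Tendsto (fun h => contractionQuotient f x₀ h x) (𝓝[>] 0)
      (𝓝 (-(f x * ⟪gradient (mlog f) x, x₀ - x⟫))) := by
  have hderiv := (hasDerivAt_comp_lineMap hd x₀).neg.exp.hasDerivWithinAt (s := Ioi 0)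
  rw [hasDerivWithinAt_iff_tendsto_slope' self_notMem_Ioi] at hderiv
  simp only [Pi.neg_apply, AffineMap.lineMap_apply_zero, exp_neg_mlog hx, mul_neg] at hderiv
  refine hderiv.congr' ?_
  filter_upwards [Ioo_mem_nhdsGT one_pos] with h hh
  have hpos : 0 < f ((1 - h) • x + h • x₀) :=
    hf.convexOn_mlog.1 hx hx₀ (by linarith [hh.2]) hh.1.le (by ring)
  simp [slope_def_field, contractionQuotient, AffineMap.lineMap_apply_module, exp_neg_mlog hx,
    exp_neg_mlog hpos]

lemma ofReal_mul_norm_gradient_le_liminf (hf : LogConcaveFn f) (hx0 : 0 ≤ f x) {r C : ℝ}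
    (hr : 0 ≤ r) (hC : ∀ y ∈ Metric.closedBall x₀ r, f x ≤ Real.exp C * f y) :
    ENNReal.ofReal r * (ENNReal.ofReal (f x) * ‖gradient (mlog f) x‖₊) ≤
      liminf (fun h => ENNReal.ofReal (contractionQuotient f x₀ h x + C * f x)) (𝓝[>] 0) := by
  rcases hx0.eq_or_lt with hzero | hx
  · simp [← hzero]
  by_cases hd : DifferentiableAt ℝ (mlog f) x
  · have hx₀ : 0 < f x₀ := pos_of_mul_pos_right
      (hx.trans_le (hC x₀ (Metric.mem_closedBall_self hr))) (Real.exp_pos C).le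
    have hlim := ENNReal.tendsto_ofReal
      ((hf.tendsto_contractionQuotient hx hx₀ hd).add_const (C * f x))
    rw [hlim.liminf_eq, ← enorm_eq_nnnorm, ← ofReal_norm, ← ENNReal.ofReal_mul hx0,
      ← ENNReal.ofReal_mul hr]
    refine ENNReal.ofReal_le_ofReal ?_
    have := mul_le_mul_of_nonneg_left (hf.mul_norm_gradient_mlog_le hx hd hr hC) hx0
    linarith
  · simp [gradient_eq_zero_of_not_differentiableAt hd]

lemma mul_lintegral_norm_gradient_le (hf : LogConcaveFn f) (hf0 : ∀ x, 0 ≤ f x)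
    (hfin : totalMass f < ⊤) {r C : ℝ} (hr : 0 ≤ r)
    (hC : ∀ x, ∀ y ∈ Metric.closedBall x₀ r, f x ≤ Real.exp C * f y) :
    ENNReal.ofReal r * ∫⁻ x, ENNReal.ofReal (f x) * ‖gradient (mlog f) x‖₊ ≤
      ENNReal.ofReal ((n + C) * ∫ x, f x) := by
  have hint : Integrable f := hf.integrable hf0 hfin
  have hlim : Tendsto (fun h => ∫⁻ x, ENNReal.ofReal (contractionQuotient f x₀ h x + C * f x))
      (𝓝[>] 0) (𝓝 (ENNReal.ofReal ((n + C) * ∫ x, f x))) := by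
    have hreal := tendsto_integral_contractionQuotient_add hint x₀ C
    rw [finrank_euclideanSpace_fin] at hreal
    refine (ENNReal.tendsto_ofReal hreal).congr' ?_
    filter_upwards [Ioo_mem_nhdsGT one_pos] with h hh
    refine ofReal_integral_eq_lintegral_ofReal ?_ (ae_of_all _ fun x => ?_)
    · exact (integrable_contractionQuotient hint x₀ hh.2.ne).add (hint.const_mul C)
    · exact hf.contractionQuotient_add_nonneg hf0 (hC x x₀ (Metric.mem_closedBall_self hr))
        hh.1 hh.2.le
  calc ENNReal.ofReal r * ∫⁻ x, ENNReal.ofReal (f x) * ‖gradient (mlog f) x‖₊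
      = ∫⁻ x, ENNReal.ofReal r * (ENNReal.ofReal (f x) * ‖gradient (mlog f) x‖₊) :=
        (lintegral_const_mul' _ _ ENNReal.ofReal_ne_top).symm
    _ ≤ ∫⁻ x, liminf (fun h => ENNReal.ofReal (contractionQuotient f x₀ h x + C * f x))
          (𝓝[>] 0) :=
        lintegral_mono fun x => hf.ofReal_mul_norm_gradient_le_liminf (hf0 x) hr (hC x)
    _ ≤ liminf (fun h => ∫⁻ x, ENNReal.ofReal (contractionQuotient f x₀ h x + C * f x))
          (𝓝[>] 0) := lintegral_liminf_le' fun h =>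
        ((aemeasurable_contractionQuotient hint x₀ h).add
          (hint.aemeasurable.const_mul C)).ennreal_ofReal
    _ = ENNReal.ofReal ((n + C) * ∫ x, f x) := hlim.liminf_eq

lemma lintegral_norm_gradient_lt_top (hf : LogConcaveFn f) (hf0 : ∀ x, 0 ≤ f x)
    (hfin : totalMass f < ⊤) {r δ : ℝ} (hr : 0 < r) (hδ : 0 < δ)
    (hball : ∀ y ∈ Metric.closedBall x₀ r, δ ≤ f y) :
    ∫⁻ x, ENNReal.ofReal (f x) * ‖gradient (mlog f) x‖₊ < ⊤ := by
  obtain ⟨A, hA⟩ := hf.exists_forall_le hf0 hfin hr hδ hball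
  have hA0 : 0 < A := hδ.trans_le ((hball x₀ (Metric.mem_closedBall_self hr.le)).trans (hA x₀))
  have hratio : ∀ x, ∀ y ∈ Metric.closedBall x₀ r, f x ≤ Real.exp (Real.log (A / δ)) * f y :=
    fun x y hy => by
      rw [Real.exp_log (by positivity)]
      calc f x ≤ A / δ * δ := by rw [div_mul_cancel₀ _ hδ.ne']; exact hA x
        _ ≤ A / δ * f y := by gcongr; exact hball y hy
  have hle := hf.mul_lintegral_norm_gradient_le hf0 hfin hr.le hratio
  exact ENNReal.lt_top_of_mul_ne_top_right (hle.trans_lt ENNReal.ofReal_lt_top).ne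
    (ENNReal.ofReal_pos.2 hr).ne'

lemma lintegral_nnnorm_muF_le (hf : LogConcaveFn f) (hf0 : ∀ x, 0 ≤ f x) :
    ∫⁻ x, ‖x‖₊ ∂muF f ≤ ∫⁻ x, ENNReal.ofReal (f x) * ‖gradient (mlog f) x‖₊ := by
  refine (lintegral_map_le _ _).trans_eq ?_
  exact lintegral_withDensity_eq_lintegral_mul_non_measurable₀ _
    (hf.aemeasurable hf0).ennreal_ofReal (ae_of_all _ fun x => ENNReal.ofReal_lt_top) _

end Gradient

end LogConcaveFn

lemma isFiniteMeasure_muF {n : ℕ} {f : Euc n → ℝ} (hfin : totalMass f < ⊤) :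
    IsFiniteMeasure (muF f) := by
  have := isFiniteMeasure_withDensity (μ := volume) hfin.ne
  exact Measure.isFiniteMeasure_map _ _

lemma isFiniteMeasure_nuF {n : ℕ} {f : Euc n → ℝ}
    (hfin : ∫⁻ x in frontier (spt f), ENNReal.ofReal (f x) ∂μH[(n : ℝ) - 1] < ⊤) :
    IsFiniteMeasure (nuF f) := by
  have : IsFiniteMeasure (bdryMeasure f) := isFiniteMeasure_withDensity hfin.ne
  exact Measure.isFiniteMeasure_map _ _

theorem surface_measures_finite_general (n : ℕ) (f : Euc n → ℝ) (hf0 : ∀ x, 0 ≤ f x)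
    (hflc : LogConcaveFn f) (hfpos : 0 < totalMass f) (hffin : totalMass f < ⊤) :
    IsFiniteMeasure (muF f) ∧
    (∫⁻ x, (‖x‖₊ : ℝ≥0∞) ∂(muF f)) < ⊤ ∧
    IsFiniteMeasure (nuF f) ∧
    (∫⁻ x in frontier (spt f), ENNReal.ofReal (f x)
        ∂(μH[(n : ℝ) - 1] : Measure (Euc n))) < ⊤ := by
  obtain ⟨x₀, r, δ, hr, hδ, hball⟩ :=
    exists_closedBall_forall_le_of_quasiconcaveOn (hflc.quasiconcaveOn hf0) hfpos
  have hboundary := hflc.setLIntegral_frontier_spt_lt_top hf0 hffin hr hδ hball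
  have hgradient := hflc.lintegral_norm_gradient_lt_top hf0 hffin hr hδ hball
  exact ⟨isFiniteMeasure_muF hffin, (hflc.lintegral_nnnorm_muF_le hf0).trans_lt hgradient,
    isFiniteMeasure_nuF hboundary, hboundary⟩

/-- For upper semicontinuous log-concave `f` with `0 < ∫ f < ∞`,
the measure `μ_f` is finite with finite first moment, and `ν_f` is finite,
i.e. `∫_{∂K_f} f dH^{n-1} < ∞`. -/
theorem surface_measures_finite (n : ℕ) (f : Euc n → ℝ)
    (hf0 : ∀ x, 0 ≤ f x) (hfusc : UpperSemicontinuous f) (hflc : LogConcaveFn f)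
    (hfpos : 0 < totalMass f) (hffin : totalMass f < ⊤) :
    IsFiniteMeasure (muF f) ∧
    (∫⁻ x, (‖x‖₊ : ℝ≥0∞) ∂(muF f)) < ⊤ ∧
    IsFiniteMeasure (nuF f) ∧
    (∫⁻ x in frontier (spt f), ENNReal.ofReal (f x)
        ∂(μH[(n : ℝ) - 1] : Measure (Euc n))) < ⊤ :=
  surface_measures_finite_general n f hf0 hflc hfpos hffin

end
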